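/- arXiv:2208.04446 — 6 statements merged into one kernel-verified Lean document; each statement's English description precedes it below -/
import Mathlib

section
/- Under the NUM setup and the SDGM iterates with the parameter choice Δ_j^t = [AAᵀe_m]_j·γ_-^t/μ for all j ∈ {1,…,m} and γ_+^t = (m−1)·γ_-^t for all t ≥ 1, every primal iterate is feasible: A x^t ≤ c componentwise for all t ≥ 1. -/
/-!
Each user's best response is antitone in its path price and `1/μ`-Lipschitz in it, by adding the
first-order optimality conditions at two prices and using strong concavity (`response_sub_le`).
All multipliers stay below `lamBar`, so in one iteration every multiplier drops by at most `γm t`.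

Feasibility is then propagated from `t` to `t + 1`, link by link. If link `j` satisfies its
constraint with margin `Δ t j`, its load grows by at most
`∑ i, A j i * (Aᵀ e) i * γm t / μ = Δ t j`, which the margin absorbs. Otherwise its multiplier
rises: either it reaches `lamBar`, where the safe-price assumption applies, or it rises by
`(m - 1) * γm t`, which covers the total drop of the other `m - 1` multipliers. In the latter
case no user of link `j` sees a lower path price, so the load of link `j` does not grow.
-/

open Matrix Set

/-- First-order optimality (variational inequality) for maximizing `g z - p * z` on `[a, b]`. -/
lemma deriv_sub_mul_sub_nonpos {g : ℝ → ℝ} {a b p x y : ℝ}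
    (hd : DifferentiableAt ℝ g x) (hx : x ∈ Icc a b) (hy : y ∈ Icc a b)
    (hmax : ∀ z ∈ Icc a b, g z - p * z ≤ g x - p * x) :
    (deriv g x - p) * (y - x) ≤ 0 := by
  have h1 : HasDerivAt (fun z => g z - p * z) (deriv g x - p) x := by
    have h := hd.hasDerivAt.sub ((hasDerivAt_id x).const_mul p)
    rw [mul_one] at h
    exact h
  have h2 : IsLocalMaxOn (fun z => g z - p * z) (Icc a b) x :=
    IsMaxOn.localize (fun z hz => hmax z hz)
  have h3 := h2.hasFDerivWithinAt_nonpos h1.hasFDerivAt.hasFDerivWithinAt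
    (sub_mem_posTangentConeAt_of_segment_subset ((convex_Icc a b).segment_subset hx hy))
  simpa [mul_comm] using h3

/-- If the price drops from `p` to `q` by at most `d ≥ 0`, the best response grows by at most
`d / μ`. For `d = 0` this is antitonicity of the best response. -/
lemma response_sub_le {g : ℝ → ℝ} {a b μ p q d x y : ℝ} (hμ : 0 < μ)
    (hd : ∀ z ∈ Icc a b, DifferentiableAt ℝ g z)
    (hsc : ∀ z ∈ Icc a b, ∀ w ∈ Icc a b, (deriv g w - deriv g z) * (z - w) ≥ μ * (z - w) ^ 2)
    (hx : x ∈ Icc a b) (hy : y ∈ Icc a b)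
    (hxmax : ∀ z ∈ Icc a b, g z - p * z ≤ g x - p * x)
    (hymax : ∀ z ∈ Icc a b, g z - q * z ≤ g y - q * y)
    (hpq : p - q ≤ d) (hd0 : 0 ≤ d) : y - x ≤ d / μ := by
  rw [le_div_iff₀ hμ]
  have h1 := deriv_sub_mul_sub_nonpos (hd x hx) hx hy hxmax
  have h2 := deriv_sub_mul_sub_nonpos (hd y hy) hy hx hymax
  have h3 := hsc y hy x hx
  rcases le_or_gt y x with h | h
  · nlinarith
  · have h4 : (y - x) * ((y - x) * μ) ≤ (y - x) * d := by nlinarith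
    exact le_of_mul_le_mul_left h4 (by linarith)

/-- Under the NUM setup and the SDGM iterates with the parameter choice
Δ_j^t = [AAᵀe_m]_j·γ_-^t/μ and γ_+^t = (m−1)·γ_-^t, every primal iterate is feasible. -/
theorem sdgm_feasibility
    (n m : ℕ) (hn : 0 < n) (hm : 0 < m)
    (A : Matrix (Fin m) (Fin n) ℝ)
    (hA : ∀ j i, A j i = 0 ∨ A j i = 1)
    (c : Fin m → ℝ) (hc : ∀ j, 0 ≤ c j)
    (xlo xhi : Fin n → ℝ) (hxlo : ∀ i, 0 ≤ xlo i) (hlohi : ∀ i, xlo i ≤ xhi i)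
    (μ : ℝ) (hμ : 0 < μ)
    (f : Fin n → ℝ → ℝ)
    (hdiff : ∀ i, ∀ z ∈ Icc (xlo i) (xhi i), DifferentiableAt ℝ (f i) z)
    (hsc : ∀ i, ∀ z ∈ Icc (xlo i) (xhi i), ∀ w ∈ Icc (xlo i) (xhi i),
      (deriv (f i) w - deriv (f i) z) * (z - w) ≥ μ * (z - w) ^ 2)
    (lamBar : ℝ) (hlamBar : 0 < lamBar)
    (γm γp : ℕ → ℝ) (hγm : ∀ t, 1 ≤ t → 0 ≤ γm t) (hγp : ∀ t, 1 ≤ t → 0 ≤ γp t)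
    (Δ : ℕ → Fin m → ℝ) (hΔ : ∀ t, 1 ≤ t → ∀ j, 0 ≤ Δ t j)
    (lam : ℕ → Fin m → ℝ) (x : ℕ → Fin n → ℝ)
    (hinit : ∀ j, lam 1 j = lamBar)
    (hxmem : ∀ t, 1 ≤ t → ∀ i, x t i ∈ Icc (xlo i) (xhi i))
    (hxmax : ∀ t, 1 ≤ t → ∀ i, ∀ z ∈ Icc (xlo i) (xhi i),
      f i z - (Aᵀ *ᵥ lam t) i * z ≤ f i (x t i) - (Aᵀ *ᵥ lam t) i * (x t i))
    (hupd : ∀ t, 1 ≤ t → ∀ j,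
      ((A *ᵥ x t) j + Δ t j - c j < 0 → lam (t + 1) j = max 0 (lam t j - γm t)) ∧
      ((A *ᵥ x t) j + Δ t j - c j ≥ 0 → lam (t + 1) j = min lamBar (lam t j + γp t)))
    (hsafe : ∀ t, 1 ≤ t → ∀ j, lam t j = lamBar → (A *ᵥ x t) j - c j ≤ 0)
    (hΔchoice : ∀ t, 1 ≤ t → ∀ j,
      Δ t j = ((A * Aᵀ) *ᵥ (fun _ => (1 : ℝ))) j * γm t / μ)
    (hγpchoice : ∀ t, 1 ≤ t → γp t = ((m : ℝ) - 1) * γm t) :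
    ∀ t, 1 ≤ t → ∀ j, (A *ᵥ x t) j ≤ c j := by
  have hle : ∀ t, 1 ≤ t → ∀ j, lam t j ≤ lamBar := by
    intro t ht
    induction t, ht using Nat.le_induction with
    | base => exact fun j => (hinit j).le
    | succ t ht ih =>
      intro j
      obtain ⟨h1, h2⟩ := hupd t ht j
      rcases lt_or_ge ((A *ᵥ x t) j + Δ t j - c j) 0 with h | h
      · rw [h1 h]
        exact max_le hlamBar.le (by linarith [ih j, hγm t ht])
      · rw [h2 h]
        exact min_le_left _ _
  have hdrop : ∀ t, 1 ≤ t → ∀ j, lam t j - lam (t + 1) j ≤ γm t := by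
    intro t ht j
    obtain ⟨h1, h2⟩ := hupd t ht j
    rcases lt_or_ge ((A *ᵥ x t) j + Δ t j - c j) 0 with h | h
    · rw [h1 h]
      linarith [le_max_right 0 (lam t j - γm t)]
    · rw [h2 h]
      have : lam t j ≤ min lamBar (lam t j + γp t) :=
        le_min (hle t ht j) (by linarith [hγp t ht])
      linarith [hγm t ht]
  have hA0 : ∀ j i, 0 ≤ A j i := by
    intro j i
    rcases hA j i with h | h <;> simp [h]
  have hA1 : ∀ j i, A j i ≤ 1 := by
    intro j i
    rcases hA j i with h | h <;> simp [h]
  have hprice : ∀ t i, (Aᵀ *ᵥ lam t) i - (Aᵀ *ᵥ lam (t + 1)) i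
      = ∑ k, A k i * (lam t k - lam (t + 1) k) := by
    intro t i
    simp [mulVec, dotProduct, mul_sub]
  have hresp : ∀ t, 1 ≤ t → ∀ i d, 0 ≤ d →
      ∑ k, A k i * (lam t k - lam (t + 1) k) ≤ d → x (t + 1) i - x t i ≤ d / μ := by
    intro t ht i d hd0 hd
    have ht' : 1 ≤ t + 1 := by omega
    exact response_sub_le hμ (hdiff i) (hsc i) (hxmem t ht i) (hxmem (t + 1) ht' i)
      (hxmax t ht i) (hxmax (t + 1) ht' i) ((hprice t i).trans_le hd) hd0
  intro t ht
  induction t, ht using Nat.le_induction with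
  | base => exact fun j => sub_nonpos.mp (hsafe 1 le_rfl j (hinit j))
  | succ t ht ih =>
    intro j
    have ht' : 1 ≤ t + 1 := by omega
    obtain ⟨h1, h2⟩ := hupd t ht j
    rcases lt_or_ge ((A *ᵥ x t) j + Δ t j - c j) 0 with h | h
    · have hΔeq : Δ t j = ∑ i, A j i * ((∑ k, A k i * γm t) / μ) := by
        rw [hΔchoice t ht j, ← mulVec_mulVec]
        simp only [mulVec, dotProduct, transpose_apply, mul_one, ← Finset.sum_mul]
        rw [Finset.sum_mul, Finset.sum_div]
        exact Finset.sum_congr rfl fun i _ => by ring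
      have hgrow : (A *ᵥ x (t + 1)) j - (A *ᵥ x t) j ≤ Δ t j := by
        rw [hΔeq]
        simp only [mulVec, dotProduct, ← Finset.sum_sub_distrib, ← mul_sub]
        refine Finset.sum_le_sum fun i _ => mul_le_mul_of_nonneg_left ?_ (hA0 j i)
        exact hresp t ht i _ (Finset.sum_nonneg fun k _ => mul_nonneg (hA0 k i) (hγm t ht))
          (Finset.sum_le_sum fun k _ => mul_le_mul_of_nonneg_left (hdrop t ht k) (hA0 k i))
      linarith
    · have hlam := h2 h
      rcases le_total lamBar (lam t j + γp t) with hb | hb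
      · rw [min_eq_left hb] at hlam
        exact sub_nonpos.mp (hsafe (t + 1) ht' j hlam)
      · rw [min_eq_right hb] at hlam
        refine le_trans ?_ (ih j)
        simp only [mulVec, dotProduct]
        refine Finset.sum_le_sum fun i _ => ?_
        rcases hA j i with hji | hji
        · simp [hji]
        · -- The rise `(m - 1) * γm t` at link `j` pays for the drops at the other `m - 1` links.
          have hp : ∑ k, A k i * (lam t k - lam (t + 1) k) ≤ 0 := by
            rw [← Finset.add_sum_erase _ _ (Finset.mem_univ j)]
            have hrest : ∑ k ∈ Finset.univ.erase j, A k i * (lam t k - lam (t + 1) k)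
                ≤ ∑ k ∈ Finset.univ.erase j, γm t := by
              refine Finset.sum_le_sum fun k _ => ?_
              exact (mul_le_mul_of_nonneg_left (hdrop t ht k) (hA0 k i)).trans
                (mul_le_of_le_one_left (hγm t ht) (hA1 k i))
            rw [Finset.sum_const, Finset.card_erase_of_mem (Finset.mem_univ j),
              Finset.card_univ, Fintype.card_fin, nsmul_eq_mul, Nat.cast_pred hm,
              ← hγpchoice t ht] at hrest
            rw [hji, hlam]
            linarith
          have := hresp t ht i 0 le_rfl hp
          rw [zero_div] at this
          simp only [hji, one_mul]
          linarith
end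

section
/- Under the NUM setup, the SDGM iterates with Δ_j^t = [AAᵀe_m]_j·γ_-^t/μ, γ_+^t = (m−1)·γ_-^t, and γ_-^t = γ/√t for some γ > 0, the iterates x^t are feasible (A x^t ≤ c) for all t ≥ 1, and for every T ≥ 1 the static regret satisfies Σ_{t=1}^T (f⋆ − f(x^t)) ≤ λ̄²·‖c‖₁·√T/γ + 2·C·γ·√T, where C = ‖c‖₁ + λ̄·m·(‖Aᵀe_m‖² + ρ(AᵀA)·(m−1)²/μ)/μ, ‖·‖ is the Euclidean norm, ‖·‖₁ the 1-norm, and ρ(AᵀA) the spectral radius of AᵀA. -/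
/-!
Feasibility is an induction on `t`.  Strong concavity makes the demand `x_i` of user `i`
nonincreasing and `1/μ`-Lipschitz in its price `p_i`.  If link `j` lowers its price, then no price
`p_i` drops by more than `(Aᵀe)_i γ₋`, so the load on `j` grows by at most the margin `Δ_j`.  If it
raises its price, the increase `(m - 1) γ₋` compensates the decreases of the other `m - 1` links, so
no user of `j` sees its price fall and the load on `j` cannot grow; when `λ_j` is capped at `λ̄`,
the safe-price assumption applies instead.

For the regret put `s = c - A x^t ≥ 0` and `δ = λ^{t+1} - λ^t`.  Weak duality gives
`f⋆ - f(x^t) ≤ ⟨λ^t, s⟩`.  Convexity of the dual function gives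
`q_{t+1} - q_t ≤ ⟨s', δ⟩` with `s' = c - A x^{t+1}`, and the Lipschitz property gives
`⟨s' - s, δ⟩ ≤ ‖Aᵀδ‖²/μ ≤ (1/μ) ∑_j [AAᵀe]_j δ_j²` (`argmax_cocoercive`, `sq_transpose_le`).
The quadratic error is not charged to the spectral radius: the scalar inequality `coord_step`
absorbs it into the term `λ̄ m Δ_j`, up to a multiple of `δ_j`.  That multiple telescopes to
`λ_j^{T+1} - λ̄ ≤ 0`, because all prices start at the cap.  The dual values enter with the increasing
weights `λ̄ √t / γ` and are summed by parts, using `0 ≤ q_t - f⋆ ≤ λ̄ ‖c‖₁`.  Hence the regret bound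
holds even without the term containing `ρ`, which is nonnegative.
-/

open Matrix Set

/-! ### Demand as a function of price -/

/-- First-order optimality condition for maximizing `g z - p z` over an interval. -/
lemma argmax_foc {g : ℝ → ℝ} {a b p x z : ℝ} (hd : DifferentiableAt ℝ g x)
    (hx : x ∈ Icc a b) (hz : z ∈ Icc a b)
    (hmax : ∀ y ∈ Icc a b, g y - p * y ≤ g x - p * x) :
    (deriv g x - p) * (z - x) ≤ 0 := by
  have hD : HasDerivAt (fun y => g y - p * y) (deriv g x - p) x := by
    simpa only [id, mul_one] using hd.hasDerivAt.fun_sub ((hasDerivAt_id x).const_mul p)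
  have hloc : IsLocalMaxOn (fun y => g y - p * y) (Icc a b) x :=
    (show IsMaxOn (fun y => g y - p * y) (Icc a b) x from hmax).localize
  have hcone : z - x ∈ posTangentConeAt (Icc a b) x :=
    sub_mem_posTangentConeAt_of_segment_subset ((convex_Icc a b).segment_subset hx hz)
  have := hloc.hasFDerivWithinAt_nonpos hD.hasFDerivAt.hasFDerivWithinAt hcone
  simpa [mul_comm] using this

/-- Cocoercivity of the demand map: the common source of its monotonicity and of its
`1/μ`-Lipschitz continuity in the price. -/
lemma argmax_cocoercive {g : ℝ → ℝ} {a b p p' x x' μ : ℝ}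
    (hdiff : ∀ z ∈ Icc a b, DifferentiableAt ℝ g z)
    (hsc : ∀ z ∈ Icc a b, ∀ w ∈ Icc a b,
      (deriv g w - deriv g z) * (z - w) ≥ μ * (z - w) ^ 2)
    (hx : x ∈ Icc a b) (hx' : x' ∈ Icc a b)
    (hmax : ∀ y ∈ Icc a b, g y - p * y ≤ g x - p * x)
    (hmax' : ∀ y ∈ Icc a b, g y - p' * y ≤ g x' - p' * x') :
    μ * (x - x') ^ 2 ≤ (p' - p) * (x - x') := by
  have h1 := argmax_foc (hdiff x hx) hx hx' hmax
  have h2 := argmax_foc (hdiff x' hx') hx' hx hmax'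
  have h3 := hsc x hx x' hx'
  linarith

lemma le_add_div_of_cocoercive {μ p p' x x' B : ℝ} (hμ : 0 < μ) (hB : 0 ≤ B)
    (h : μ * (x - x') ^ 2 ≤ (p' - p) * (x - x')) (hp : p - B ≤ p') : x' ≤ x + B / μ := by
  by_contra! hlt
  have hpos : 0 ≤ B / μ := by positivity
  have hxx : 0 < x' - x := by linarith
  have hBμ : B < μ * (x' - x) := by
    have : B / μ < x' - x := by linarith
    rwa [div_lt_iff₀ hμ, mul_comm] at this
  nlinarith [mul_pos hxx (sub_pos.2 hBμ)]

lemma mul_le_sq_div_of_cocoercive {μ u v : ℝ} (hμ : 0 < μ) (h : μ * u ^ 2 ≤ v * u) :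
    v * u ≤ v ^ 2 / μ := by
  rw [le_div_iff₀ hμ]
  nlinarith [sq_nonneg (v - μ * u), mul_le_mul_of_nonneg_left h hμ.le]

/-! ### Estimates for a `0/1` routing matrix -/

lemma mulVec_nonneg_apply {k l : ℕ} {B : Matrix (Fin k) (Fin l) ℝ} {v : Fin l → ℝ}
    (hB : ∀ j i, 0 ≤ B j i) (hv : ∀ i, 0 ≤ v i) (j : Fin k) : 0 ≤ (B *ᵥ v) j :=
  show 0 ≤ ∑ i, B j i * v i from Finset.sum_nonneg fun i _ => mul_nonneg (hB j i) (hv i)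

/-- Cauchy–Schwarz for a `0/1` matrix: `‖Aᵀd‖² ≤ ∑_j [AAᵀe]_j d_j²`. -/
lemma sq_transpose_le {m n : ℕ} (A : Matrix (Fin m) (Fin n) ℝ)
    (hA : ∀ j i, A j i = 0 ∨ A j i = 1) (d : Fin m → ℝ) :
    ∑ i, ((Aᵀ *ᵥ d) i) ^ 2 ≤ ∑ j, ((A * Aᵀ) *ᵥ (fun _ => (1 : ℝ))) j * d j ^ 2 := by
  have hsq : ∀ j i, A j i ^ 2 = A j i := fun j i => by
    rcases hA j i with h | h <;> simp [h]
  have hR : ∑ j, ((A * Aᵀ) *ᵥ (fun _ => (1 : ℝ))) j * d j ^ 2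
      = ∑ i, (∑ j, A j i) * ∑ j, A j i * d j ^ 2 := by
    simp only [← Matrix.mulVec_mulVec]
    simp only [Matrix.mulVec, dotProduct, Matrix.transpose_apply, mul_one, Finset.sum_mul]
    rw [Finset.sum_comm]
    refine Finset.sum_congr rfl fun i _ => ?_
    rw [← Finset.sum_mul, Finset.mul_sum]
    exact Finset.sum_congr rfl fun j _ => by ring
  rw [hR]
  refine Finset.sum_le_sum fun i _ => ?_
  have h := Finset.sum_mul_sq_le_sq_mul_sq Finset.univ (fun j => A j i) (fun j => A j i * d j)
  have e1 : ∀ j, A j i * (A j i * d j) = A j i * d j := fun j => by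
    rw [← mul_assoc, ← pow_two, hsq]
  simp only [e1, mul_pow, hsq] at h
  simpa only [Matrix.mulVec, dotProduct, Matrix.transpose_apply] using h

lemma sum_AAT_one {m n : ℕ} (A : Matrix (Fin m) (Fin n) ℝ) :
    ∑ j, ((A * Aᵀ) *ᵥ (fun _ => (1 : ℝ))) j = ∑ i, ((Aᵀ *ᵥ (fun _ => (1 : ℝ))) i) ^ 2 := by
  simp only [← Matrix.mulVec_mulVec]
  simp only [Matrix.mulVec, dotProduct, Matrix.transpose_apply, mul_one]
  rw [Finset.sum_comm]
  refine Finset.sum_congr rfl fun i _ => ?_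
  rw [← Finset.sum_mul, pow_two]

/-! ### Scalar inequalities -/

/-- One step of a single link with slack `s`, margin `D`, price `l` and relative price change
`d = (l' - l) / g`, where `M` is the number of links and `L` the price cap.
The linear correction `(M - 1) * d` with slope exactly `M - 1` is what makes the quadratic error
`d ^ 2` affordable both at `d = -1` (a full decrease) and at `d = M - 1` (a full increase). -/
lemma coord_step {M L g c s D l l' : ℝ} (hM : 2 ≤ M) (hL : 0 ≤ L) (hg : 0 < g)
    (hs : 0 ≤ s) (hsc : s ≤ c) (hD : 0 ≤ D) (hl : 0 ≤ l) (hlL : l ≤ L)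
    (hdec : D < s → l' = max 0 (l - g)) (hinc : s ≤ D → l' = min L (l + (M - 1) * g)) :
    l * s + L / g * (s * (l' - l)) + L * D * ((l' - l) / g) ^ 2
      ≤ g * c + L * D * (M + (M - 1) * ((l' - l) / g)) := by
  obtain ⟨d, hd⟩ : ∃ d, d = (l' - l) / g := ⟨_, rfl⟩
  have hl' : l' - l = g * d := by rw [hd]; field_simp
  have e : L / g * (s * (l' - l)) = L * s * d := by rw [hl']; field_simp
  rw [e, ← hd]
  have hLD : 0 ≤ L * D := mul_nonneg hL hD
  have hLs : 0 ≤ L * s := mul_nonneg hL hs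
  have hc : 0 ≤ g * c := mul_nonneg hg.le (hs.trans hsc)
  rcases lt_or_ge D s with h | h
  · have h1 := hdec h
    rcases le_total 0 (l - g) with h2 | h2
    · rw [max_eq_right h2] at h1
      have : d = -1 := by
        have : g * (d + 1) = 0 := by linarith
        rcases mul_eq_zero.1 this with h | h <;> linarith
      subst this
      nlinarith [mul_nonneg (sub_nonneg.2 hlL) hs]
    · rw [max_eq_left h2] at h1
      have hd0 : d ≤ 0 := by
        by_contra! h3
        nlinarith [mul_pos hg h3]
      have hd1 : -1 ≤ d := by
        by_contra! h3
        nlinarith [mul_pos hg (by linarith : 0 < -1 - d)]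
      have h4 : l * s ≤ g * c := mul_le_mul (by linarith) hsc hs hg.le
      have h5 : d ^ 2 ≤ M + (M - 1) * d := by
        nlinarith [mul_nonneg (by linarith : 0 ≤ d + 1) (by linarith : 0 ≤ M - d)]
      nlinarith [mul_le_mul_of_nonneg_left h5 hLD, mul_nonneg hLs (neg_nonneg.2 hd0)]
  · have h1 := hinc h
    have hd0 : 0 ≤ d := by
      have : l ≤ l' := by
        rw [h1]; exact le_min hlL (by nlinarith)
      by_contra! h3
      nlinarith [mul_pos hg (neg_pos.2 h3)]
    have hd1 : d ≤ M - 1 := by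
      have : l' ≤ l + (M - 1) * g := by rw [h1]; exact min_le_right _ _
      by_contra! h3
      nlinarith [mul_pos hg (sub_pos.2 h3)]
    have h4 : l * s ≤ L * D := mul_le_mul hlL h hs hL
    have h5 : L * s * d ≤ L * D * d :=
      mul_le_mul_of_nonneg_right (mul_le_mul_of_nonneg_left h hL) hd0
    have h6 : 1 + d + d ^ 2 ≤ M + (M - 1) * d := by
      nlinarith [mul_nonneg (by linarith : 0 ≤ d + 1) (by linarith : 0 ≤ M - 1 - d)]
    nlinarith [mul_le_mul_of_nonneg_left h6 hLD]

lemma inv_sqrt_succ_le (T : ℕ) :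
    1 / Real.sqrt ((T + 1 : ℕ) : ℝ) ≤ 2 * (Real.sqrt ((T + 1 : ℕ) : ℝ) - Real.sqrt (T : ℝ)) := by
  have h1 : 0 < Real.sqrt ((T + 1 : ℕ) : ℝ) := Real.sqrt_pos.2 (by positivity)
  have h2 := Real.sq_sqrt (by positivity : (0 : ℝ) ≤ ((T + 1 : ℕ) : ℝ))
  have h3 := Real.sq_sqrt (by positivity : (0 : ℝ) ≤ (T : ℝ))
  rw [div_le_iff₀ h1]
  push_cast at *
  nlinarith [sq_nonneg (Real.sqrt ((T : ℝ) + 1) - Real.sqrt (T : ℝ))]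

/-! ### Feasibility and regret -/

/-- With Δ_j^t = [AAᵀe_m]_j·γ_-^t/μ, γ_+^t = (m−1)·γ_-^t and γ_-^t = γ/√t,
the SDGM iterates are feasible and the static regret is bounded by
λ̄²‖c‖₁√T/γ + 2Cγ√T. -/
theorem sdgm_regret
    (n m : ℕ) (hn : 0 < n) (hm : 2 ≤ m)
    (A : Matrix (Fin m) (Fin n) ℝ)
    (hA : ∀ j i, A j i = 0 ∨ A j i = 1)
    (c : Fin m → ℝ) (hc : ∀ j, 0 ≤ c j)
    (xlo xhi : Fin n → ℝ) (hxlo : ∀ i, 0 ≤ xlo i) (hlohi : ∀ i, xlo i ≤ xhi i)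
    (μ : ℝ) (hμ : 0 < μ)
    (f : Fin n → ℝ → ℝ)
    (hdiff : ∀ i, ∀ z ∈ Icc (xlo i) (xhi i), DifferentiableAt ℝ (f i) z)
    (hsc : ∀ i, ∀ z ∈ Icc (xlo i) (xhi i), ∀ w ∈ Icc (xlo i) (xhi i),
      (deriv (f i) w - deriv (f i) z) * (z - w) ≥ μ * (z - w) ^ 2)
    (lamBar : ℝ) (hlamBar : 0 < lamBar)
    (γ : ℝ) (hγ : 0 < γ)
    (γm γp : ℕ → ℝ)
    (hγmchoice : ∀ t, 1 ≤ t → γm t = γ / Real.sqrt t)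
    (hγpchoice : ∀ t, 1 ≤ t → γp t = ((m : ℝ) - 1) * γm t)
    (Δ : ℕ → Fin m → ℝ)
    (hΔchoice : ∀ t, 1 ≤ t → ∀ j,
      Δ t j = ((A * Aᵀ) *ᵥ (fun _ => (1 : ℝ))) j * γm t / μ)
    (lam : ℕ → Fin m → ℝ) (x : ℕ → Fin n → ℝ)
    (hinit : ∀ j, lam 1 j = lamBar)
    (hxmem : ∀ t, 1 ≤ t → ∀ i, x t i ∈ Icc (xlo i) (xhi i))
    (hxmax : ∀ t, 1 ≤ t → ∀ i, ∀ z ∈ Icc (xlo i) (xhi i),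
      f i z - (Aᵀ *ᵥ lam t) i * z ≤ f i (x t i) - (Aᵀ *ᵥ lam t) i * (x t i))
    (hupd : ∀ t, 1 ≤ t → ∀ j,
      ((A *ᵥ x t) j + Δ t j - c j < 0 → lam (t + 1) j = max 0 (lam t j - γm t)) ∧
      ((A *ᵥ x t) j + Δ t j - c j ≥ 0 → lam (t + 1) j = min lamBar (lam t j + γp t)))
    (hsafe : ∀ t, 1 ≤ t → ∀ j, lam t j = lamBar → (A *ᵥ x t) j - c j ≤ 0)
    -- the primal optimum x⋆ and optimal value f⋆
    (xstar : Fin n → ℝ) (hxstarmem : ∀ i, xstar i ∈ Icc (xlo i) (xhi i))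
    (hxstarfeas : ∀ j, (A *ᵥ xstar) j ≤ c j)
    (hxstaropt : ∀ y : Fin n → ℝ, (∀ i, y i ∈ Icc (xlo i) (xhi i)) →
      (∀ j, (A *ᵥ y) j ≤ c j) → ∑ i, f i (y i) ≤ ∑ i, f i (xstar i))
    (fstar : ℝ) (hfstar : fstar = ∑ i, f i (xstar i))
    -- the spectral radius of AᵀA and the dual smoothness (descent) inequality
    (ρ : ℝ) (hρ : ρ = (spectralRadius ℝ (Aᵀ * A)).toReal)
    (hdescent : ∀ t, 1 ≤ t →
      (∑ i, f i (x (t + 1) i)) - lam (t + 1) ⬝ᵥ (A *ᵥ x (t + 1) - c) ≤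
        ((∑ i, f i (x t i)) - lam t ⬝ᵥ (A *ᵥ x t - c)) +
          (c - A *ᵥ x t) ⬝ᵥ (lam (t + 1) - lam t) +
          (ρ / μ) / 2 * ∑ j, (lam (t + 1) j - lam t j) ^ 2) :
    (∀ t, 1 ≤ t → ∀ j, (A *ᵥ x t) j ≤ c j) ∧
    (∀ T : ℕ, 1 ≤ T →
      ∑ t ∈ Finset.Icc 1 T, (fstar - ∑ i, f i (x t i)) ≤
        lamBar ^ 2 * (∑ j, c j) * Real.sqrt T / γ +
          2 * ((∑ j, c j) +
            lamBar * m * ((∑ i, ((Aᵀ *ᵥ (fun _ => (1 : ℝ))) i) ^ 2) +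
              ρ * ((m : ℝ) - 1) ^ 2 / μ) / μ) * γ * Real.sqrt T) := by
  have hM : (2 : ℝ) ≤ (m : ℝ) := by exact_mod_cast hm
  have hA0 : ∀ j i, 0 ≤ A j i := fun j i => by rcases hA j i with h | h <;> simp [h]
  have hγpos : ∀ t, 1 ≤ t → 0 < γm t := fun t ht => by
    rw [hγmchoice t ht]
    exact div_pos hγ (Real.sqrt_pos.2 (by exact_mod_cast ht))
  have hlow : ∀ t, 1 ≤ t → ∀ j, 0 ≤ lam t j ∧ lam t j ≤ lamBar := by
    intro t ht
    induction t, ht using Nat.le_induction with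
    | base => intro j; rw [hinit j]; exact ⟨hlamBar.le, le_rfl⟩
    | succ t ht ih =>
      intro j
      have hg := hγpos t ht
      have hp := hγpchoice t ht
      rcases lt_or_ge ((A *ᵥ x t) j + Δ t j - c j) 0 with h | h
      · rw [(hupd t ht j).1 h]
        exact ⟨le_max_left _ _, max_le hlamBar.le (by linarith [(ih j).2])⟩
      · rw [(hupd t ht j).2 h]
        refine ⟨le_min hlamBar.le ?_, min_le_left _ _⟩
        rw [hp]; nlinarith [(ih j).1]
  -- no link ever lowers its price by more than `γm t`
  have hdrop : ∀ t, 1 ≤ t → ∀ j, lam t j - γm t ≤ lam (t + 1) j := by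
    intro t ht j
    have hg := hγpos t ht
    have hp := hγpchoice t ht
    rcases lt_or_ge ((A *ᵥ x t) j + Δ t j - c j) 0 with h | h
    · rw [(hupd t ht j).1 h]; exact le_max_right _ _
    · rw [(hupd t ht j).2 h]
      refine le_min (by linarith [(hlow t ht j).2]) ?_
      rw [hp]; nlinarith
  have hcoco : ∀ t, 1 ≤ t → ∀ i, μ * (x t i - x (t + 1) i) ^ 2 ≤
      ((Aᵀ *ᵥ lam (t + 1)) i - (Aᵀ *ᵥ lam t) i) * (x t i - x (t + 1) i) := fun t ht i =>
    argmax_cocoercive (hdiff i) (hsc i) (hxmem t ht i) (hxmem (t + 1) (by omega) i)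
      (hxmax t ht i) (hxmax (t + 1) (by omega) i)
  have hdeg0 : ∀ i, 0 ≤ (Aᵀ *ᵥ (fun _ => (1 : ℝ))) i := 
    mulVec_nonneg_apply (fun i j => hA0 j i) fun _ => zero_le_one
  have hAAT0 : ∀ j, 0 ≤ ((A * Aᵀ) *ᵥ (fun _ => (1 : ℝ))) j := fun j => by
    rw [← Matrix.mulVec_mulVec]
    exact mulVec_nonneg_apply hA0 hdeg0 j
  have hfeas : ∀ t, 1 ≤ t → ∀ j, (A *ᵥ x t) j ≤ c j := by
    intro t ht
    induction t, ht using Nat.le_induction with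
    | base => intro j; linarith [hsafe 1 le_rfl j (hinit j)]
    | succ t ht ih =>
      intro j
      have hg := hγpos t ht
      rcases lt_or_ge ((A *ᵥ x t) j + Δ t j - c j) 0 with h | h
      · have hx : ∀ i, x (t + 1) i ≤ x t i + (Aᵀ *ᵥ (fun _ => (1 : ℝ))) i * γm t / μ := by
          intro i
          refine le_add_div_of_cocoercive hμ (mul_nonneg (hdeg0 i) hg.le) (hcoco t ht i) ?_
          simp only [Matrix.mulVec, dotProduct, Matrix.transpose_apply, mul_one, Finset.sum_mul]
          rw [← Finset.sum_sub_distrib]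
          refine Finset.sum_le_sum fun k _ => ?_
          nlinarith [mul_le_mul_of_nonneg_left (hdrop t ht k) (hA0 k i)]
        have hsum : (A *ᵥ x (t + 1)) j ≤ (A *ᵥ x t) j + Δ t j := by
          rw [hΔchoice t ht j, ← Matrix.mulVec_mulVec]
          simp only [Matrix.mulVec, dotProduct] at hx ⊢
          rw [Finset.sum_mul, Finset.sum_div, ← Finset.sum_add_distrib]
          refine Finset.sum_le_sum fun i _ => ?_
          calc A j i * x (t + 1) i ≤ _ := mul_le_mul_of_nonneg_left (hx i) (hA0 j i)
            _ = _ := by ring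
        linarith
      · have hl := (hupd t ht j).2 h
        rcases le_total lamBar (lam t j + γp t) with h2 | h2
        · rw [min_eq_left h2] at hl
          linarith [hsafe (t + 1) (by omega) j hl]
        · rw [min_eq_right h2] at hl
          refine le_trans ?_ (ih j)
          change ∑ i, A j i * x (t + 1) i ≤ ∑ i, A j i * x t i
          refine Finset.sum_le_sum fun i _ => ?_
          rcases hA j i with hz | ho
          · simp [hz]
          · have hp : (Aᵀ *ᵥ lam t) i - 0 ≤ (Aᵀ *ᵥ lam (t + 1)) i := by
              simp only [Matrix.mulVec, dotProduct, Matrix.transpose_apply, sub_zero]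
              rw [← Finset.add_sum_erase _ _ (Finset.mem_univ j),
                ← Finset.add_sum_erase _ (fun k => A k i * lam (t + 1) k) (Finset.mem_univ j)]
              have hrest : ∑ k ∈ Finset.univ.erase j, (A k i * lam t k - γm t) ≤
                  ∑ k ∈ Finset.univ.erase j, A k i * lam (t + 1) k := by
                refine Finset.sum_le_sum fun k _ => ?_
                rcases hA k i with h0 | h0
                · rw [h0]; linarith
                · rw [h0]; linarith [hdrop t ht k]
              rw [Finset.sum_sub_distrib, Finset.sum_const,
                Finset.card_erase_of_mem (Finset.mem_univ j), Finset.card_univ, Fintype.card_fin,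
                nsmul_eq_mul, Nat.cast_sub (by omega : 1 ≤ m), Nat.cast_one] at hrest
              rw [ho, hl, hγpchoice t ht]
              linarith
            have := le_add_div_of_cocoercive hμ le_rfl (hcoco t ht i) hp
            rw [zero_div, add_zero] at this
            exact mul_le_mul_of_nonneg_left this (hA0 j i)
  refine ⟨hfeas, ?_⟩
  set s : ℕ → Fin m → ℝ := fun t j => c j - (A *ᵥ x t) j with hs
  set F : ℕ → ℝ := fun t => ∑ i, f i (x t i) with hF
  -- dual value at `λ^t`
  set q : ℕ → ℝ := fun t => F t + ∑ j, lam t j * s t j with hq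
  have hs0 : ∀ t, 1 ≤ t → ∀ j, 0 ≤ s t j := fun t ht j => sub_nonneg.2 (hfeas t ht j)
  have hsc' : ∀ t, 1 ≤ t → ∀ j, s t j ≤ c j := fun t ht j =>
    sub_le_self _ (mulVec_nonneg_apply hA0 (fun i => (hxlo i).trans (hxmem t ht i).1) j)
  have hadj : ∀ (l : Fin m → ℝ) (y : Fin n → ℝ),
      ∑ j, l j * (A *ᵥ y) j = ∑ i, (Aᵀ *ᵥ l) i * y i := by
    intro l y
    have := Matrix.dotProduct_mulVec l A y
    rw [Matrix.mulVec_transpose]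
    exact this
  -- `x t` maximizes the Lagrangian over the box
  have hLag : ∀ t, 1 ≤ t → ∀ y : Fin n → ℝ, (∀ i, y i ∈ Icc (xlo i) (xhi i)) →
      ∑ i, f i (y i) + ∑ j, lam t j * (c j - (A *ᵥ y) j) ≤ q t := by
    intro t ht y hy
    have h := Finset.sum_le_sum fun i (_ : i ∈ Finset.univ) => hxmax t ht i (y i) (hy i)
    rw [Finset.sum_sub_distrib, Finset.sum_sub_distrib, ← hadj, ← hadj] at h
    simp only [hq, hs, hF, mul_sub, Finset.sum_sub_distrib]
    linarith
  have hweak : ∀ t, 1 ≤ t → fstar ≤ q t := by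
    intro t ht
    have h := hLag t ht xstar hxstarmem
    have h2 : 0 ≤ ∑ j, lam t j * (c j - (A *ᵥ xstar) j) := Finset.sum_nonneg fun j _ =>
      mul_nonneg (hlow t ht j).1 (sub_nonneg.2 (hxstarfeas j))
    rw [hfstar]; linarith
  have hqB : ∀ t, 1 ≤ t → q t - fstar ≤ lamBar * ∑ j, c j := by
    intro t ht
    have h := hxstaropt (x t) (hxmem t ht) (hfeas t ht)
    have h2 : ∑ j, lam t j * s t j ≤ lamBar * ∑ j, c j := by
      rw [Finset.mul_sum]
      exact Finset.sum_le_sum fun j _ =>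
        mul_le_mul (hlow t ht j).2 (hsc' t ht j) (hs0 t ht j) hlamBar.le
    simp only [hq, hF]
    rw [hfstar]; linarith
  set a : Fin m → ℝ := (A * Aᵀ) *ᵥ (fun _ => (1 : ℝ)) with ha
  set S : ℝ := ∑ i, ((Aᵀ *ᵥ (fun _ => (1 : ℝ))) i) ^ 2 with hS
  have haS : ∑ j, a j = S := sum_AAT_one A
  -- lower bound on the dual decrease: convexity at `λ^{t+1}` plus the Lipschitz bound on demand
  have hdual : ∀ t, 1 ≤ t → -∑ j, s t j * (lam (t + 1) j - lam t j) ≤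
      (q t - q (t + 1)) + (∑ j, a j * (lam (t + 1) j - lam t j) ^ 2) / μ := by
    intro t ht
    have h1 := hLag t ht (x (t + 1)) (hxmem (t + 1) (by omega))
    have h2 : ∑ j, (lam (t + 1) - lam t) j * ((A *ᵥ x t) j - (A *ᵥ x (t + 1)) j) ≤
        (∑ j, a j * (lam (t + 1) j - lam t j) ^ 2) / μ := by
      have e : ∑ j, (lam (t + 1) - lam t) j * ((A *ᵥ x t) j - (A *ᵥ x (t + 1)) j)
          = ∑ i, (Aᵀ *ᵥ (lam (t + 1) - lam t)) i * (x t i - x (t + 1) i) := by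
        have := hadj (lam (t + 1) - lam t) (x t - x (t + 1))
        simpa only [Matrix.mulVec_sub, Pi.sub_apply] using this
      rw [e]
      calc _ ≤ ∑ i, ((Aᵀ *ᵥ (lam (t + 1) - lam t)) i) ^ 2 / μ := by
            refine Finset.sum_le_sum fun i _ => mul_le_sq_div_of_cocoercive hμ ?_
            rw [Matrix.mulVec_sub]
            exact hcoco t ht i
        _ ≤ _ := by
            rw [← Finset.sum_div]
            exact div_le_div_of_nonneg_right (sq_transpose_le A hA _) hμ.le
    have h3 : -∑ j, s t j * (lam (t + 1) j - lam t j) =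
        ∑ j, (lam (t + 1) - lam t) j * ((A *ᵥ x t) j - (A *ᵥ x (t + 1)) j)
        + ∑ j, lam t j * s (t + 1) j - ∑ j, lam (t + 1) j * s (t + 1) j := by
      rw [← Finset.sum_neg_distrib, ← Finset.sum_add_distrib, ← Finset.sum_sub_distrib]
      refine Finset.sum_congr rfl fun j _ => ?_
      simp only [hs, Pi.sub_apply]; ring
    have h4 : q (t + 1) = F (t + 1) + ∑ j, lam (t + 1) j * s (t + 1) j := rfl
    have h5 : F (t + 1) + ∑ j, lam t j * s (t + 1) j ≤ q t := h1
    linarith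
  have hstep : ∀ t, 1 ≤ t → fstar - F t ≤ lamBar / γm t * (q t - q (t + 1)) +
      γm t * (∑ j, c j + lamBar * m * S / μ) +
      lamBar * (m - 1) / μ * ∑ j, a j * (lam (t + 1) j - lam t j) := by
    intro t ht
    have hg := hγpos t ht
    have hcs : ∀ j, lam t j * s t j + lamBar / γm t * (s t j * (lam (t + 1) j - lam t j))
        + lamBar / γm t * (a j * (lam (t + 1) j - lam t j) ^ 2 / μ) ≤
        γm t * c j + lamBar * m * γm t / μ * a j
          + lamBar * (m - 1) / μ * (a j * (lam (t + 1) j - lam t j)) := by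
      intro j
      have hΔ := hΔchoice t ht j
      have hD : 0 ≤ Δ t j := by
        rw [hΔ]; exact div_nonneg (mul_nonneg (hAAT0 j) hg.le) hμ.le
      have h := coord_step (l' := lam (t + 1) j) hM hlamBar.le hg (hs0 t ht j) (hsc' t ht j) hD
        (hlow t ht j).1 (hlow t ht j).2
        (fun h => (hupd t ht j).1 (by simp only [hs] at h; linarith))
        (fun h => by
          rw [← hγpchoice t ht]
          exact (hupd t ht j).2 (by simp only [hs] at h; linarith))
      rw [hΔ] at h
      have e1 : lamBar * (a j * γm t / μ) * ((lam (t + 1) j - lam t j) / γm t) ^ 2 =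
          lamBar / γm t * (a j * (lam (t + 1) j - lam t j) ^ 2 / μ) := by
        field_simp
      have e2 : lamBar * (a j * γm t / μ) * (m + (m - 1) * ((lam (t + 1) j - lam t j) / γm t)) =
          lamBar * m * γm t / μ * a j
          + lamBar * (m - 1) / μ * (a j * (lam (t + 1) j - lam t j)) := by
        field_simp
      rw [e1, e2] at h
      linarith
    have hsum := Finset.sum_le_sum fun j (_ : j ∈ Finset.univ) => hcs j
    simp only [Finset.sum_add_distrib, ← Finset.mul_sum, ← Finset.sum_div] at hsum
    rw [haS] at hsum
    have hd := mul_le_mul_of_nonneg_left (hdual t ht) (div_pos hlamBar hg).le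
    have hw := hweak t ht
    have e3 : γm t * (∑ j, c j + lamBar * m * S / μ) =
        γm t * ∑ j, c j + lamBar * m * γm t / μ * S := by ring
    have e4 : q t = F t + ∑ j, lam t j * s t j := rfl
    rw [e3]
    linarith
  have hS0 : 0 ≤ S := Finset.sum_nonneg fun i _ => sq_nonneg _
  have hc0 : 0 ≤ ∑ j, c j := Finset.sum_nonneg fun j _ => hc j
  set K : ℝ := ∑ j, c j + lamBar * m * S / μ with hK
  have hK0 : 0 ≤ K := by positivity
  -- summation by parts; the weight `√T` vanishes at `T = 0`
  have hmain : ∀ T : ℕ, ∑ t ∈ Finset.Icc 1 T, (fstar - F t) ≤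
      lamBar * Real.sqrt T / γ * (lamBar * ∑ j, c j - (q (T + 1) - fstar)) +
      2 * K * γ * Real.sqrt T +
      lamBar * (m - 1) / μ * ∑ j, a j * (lam (T + 1) j - lamBar) := by
    intro T
    induction T with
    | zero => simp [hinit]
    | succ T ih =>
      rw [Finset.sum_Icc_succ_top (by omega)]
      have h1 := hstep (T + 1) (by omega)
      have h2 := hqB (T + 1) (by omega)
      have h3 := inv_sqrt_succ_le T
      have hmono : Real.sqrt (T : ℝ) ≤ Real.sqrt ((T + 1 : ℕ) : ℝ) :=
        Real.sqrt_le_sqrt (by push_cast; linarith)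
      have hγe := hγmchoice (T + 1) (by omega)
      have hpos : 0 < Real.sqrt ((T + 1 : ℕ) : ℝ) := Real.sqrt_pos.2 (by positivity)
      have hw : lamBar / γm (T + 1) = lamBar * Real.sqrt ((T + 1 : ℕ) : ℝ) / γ := by
        rw [hγe]; field_simp
      have hγK : γm (T + 1) * K ≤
          2 * K * γ * (Real.sqrt ((T + 1 : ℕ) : ℝ) - Real.sqrt (T : ℝ)) := by
        rw [hγe]
        have := mul_le_mul_of_nonneg_left h3 (mul_nonneg hγ.le hK0)
        calc _ = γ * K * (1 / Real.sqrt ((T + 1 : ℕ) : ℝ)) := by ring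
          _ ≤ _ := this
          _ = _ := by ring
      have htel : ∑ j, a j * (lam (T + 1 + 1) j - lamBar) =
          ∑ j, a j * (lam (T + 1) j - lamBar) +
          ∑ j, a j * (lam (T + 1 + 1) j - lam (T + 1) j) := by
        rw [← Finset.sum_add_distrib]
        exact Finset.sum_congr rfl fun j _ => by ring
      have hAb : 0 ≤ lamBar / γ * (Real.sqrt ((T + 1 : ℕ) : ℝ) - Real.sqrt (T : ℝ)) *
          (lamBar * ∑ j, c j - (q (T + 1) - fstar)) :=
        mul_nonneg (mul_nonneg (by positivity) (sub_nonneg.2 hmono)) (sub_nonneg.2 h2)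
      rw [hw] at h1
      rw [htel]
      ring_nf at *
      linarith
  intro T hT
  have h := hmain T
  have h1 : 0 ≤ q (T + 1) - fstar := sub_nonneg.2 (hweak (T + 1) (by omega))
  have h2 : lamBar * (m - 1) / μ * ∑ j, a j * (lam (T + 1) j - lamBar) ≤ 0 := by
    refine mul_nonpos_of_nonneg_of_nonpos
      (div_nonneg (mul_nonneg hlamBar.le (by linarith)) hμ.le)
      (Finset.sum_nonpos fun j _ => mul_nonpos_of_nonneg_of_nonpos (hAAT0 j) ?_)
    linarith [(hlow (T + 1) (by omega) j).2]
  have h3 : 0 ≤ lamBar * Real.sqrt T / γ * (q (T + 1) - fstar) := by positivity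
  have hρ0 : 0 ≤ ρ := by rw [hρ]; exact ENNReal.toReal_nonneg
  have h4 : 0 ≤ 2 * (lamBar * m * (ρ * ((m : ℝ) - 1) ^ 2 / μ) / μ) * γ * Real.sqrt T := by
    positivity
  have e1 : lamBar * Real.sqrt T / γ * (lamBar * ∑ j, c j - (q (T + 1) - fstar)) =
      lamBar ^ 2 * (∑ j, c j) * Real.sqrt T / γ
        - lamBar * Real.sqrt T / γ * (q (T + 1) - fstar) := by ring
  have e2 : 2 * ((∑ j, c j) + lamBar * m * (S + ρ * ((m : ℝ) - 1) ^ 2 / μ) / μ) * γ * Real.sqrt T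
      = 2 * K * γ * Real.sqrt T
        + 2 * (lamBar * m * (ρ * ((m : ℝ) - 1) ^ 2 / μ) / μ) * γ * Real.sqrt T := by
    rw [hK]; ring
  rw [e1] at h
  rw [e2]
  linarith
end

section
/- Let a ≤ b be reals, μ > 0, and g : ℝ → ℝ differentiable and μ-strongly concave on [a,b], where μ-strong concavity of a differentiable g on a set S means (g'(y) − g'(x))·(x − y) ≥ μ·(x − y)² for all x, y ∈ S. Let p₁, p₂ ∈ ℝ, let x₁ maximize x ↦ g(x) − p₁x over [a,b], and let x₂ maximize x ↦ g(x) − p₂x over [a,b]. Then x₂ ≤ x₁ + max{0, p₁ − p₂}/μ. -/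
/-!
Only the case `x₁ < x₂` matters. Then each maximizer is a feasible direction from the other, so the
first-order conditions (`deriv_sub_mul_nonpos_of_max`) give `g' x₁ ≤ p₁` and `p₂ ≤ g' x₂`. Strong
concavity gives `μ * (x₂ - x₁) ≤ g' x₁ - g' x₂ ≤ p₁ - p₂`.
-/

open Set

/-- First-order optimality condition: at a maximizer over an interval, the derivative of the
perturbed utility is nonpositive in every feasible direction, even at an endpoint. -/
lemma deriv_sub_mul_nonpos_of_max {a b p x y : ℝ} {g : ℝ → ℝ}
    (hg : DifferentiableAt ℝ g x) (hx : x ∈ Icc a b) (hy : y ∈ Icc a b)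
    (hmax : ∀ z ∈ Icc a b, g z - p * z ≤ g x - p * x) :
    (deriv g x - p) * (y - x) ≤ 0 := by
  have hd : HasDerivAt (fun z => g z - p * z) (deriv g x - p) x := by
    simpa using hg.hasDerivAt.fun_sub ((hasDerivAt_id x).const_mul p)
  have hloc : IsLocalMaxOn (fun z => g z - p * z) (Icc a b) x :=
    IsMaxOn.localize hmax
  have h := hloc.hasFDerivWithinAt_nonpos hd.hasFDerivAt.hasFDerivWithinAt
    (sub_mem_posTangentConeAt_of_segment_subset ((convex_Icc a b).segment_subset hx hy))
  simpa [mul_comm] using h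

/-- the maximizer of a price-perturbed strongly concave utility
increases by at most max{0, p₁ − p₂}/μ when the price changes from p₁ to p₂. -/
theorem maximizer_shift_bound
    (a b μ p₁ p₂ x₁ x₂ : ℝ) (hab : a ≤ b) (hμ : 0 < μ)
    (g : ℝ → ℝ)
    (hdiff : ∀ z ∈ Icc a b, DifferentiableAt ℝ g z)
    (hsc : ∀ z ∈ Icc a b, ∀ w ∈ Icc a b,
      (deriv g w - deriv g z) * (z - w) ≥ μ * (z - w) ^ 2)
    (hx₁mem : x₁ ∈ Icc a b)
    (hx₁max : ∀ z ∈ Icc a b, g z - p₁ * z ≤ g x₁ - p₁ * x₁)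
    (hx₂mem : x₂ ∈ Icc a b)
    (hx₂max : ∀ z ∈ Icc a b, g z - p₂ * z ≤ g x₂ - p₂ * x₂) :
    x₂ ≤ x₁ + max 0 (p₁ - p₂) / μ := by
  rcases le_or_gt x₂ x₁ with h | h
  · have : 0 ≤ max 0 (p₁ - p₂) / μ := div_nonneg (le_max_left _ _) hμ.le
    linarith
  · have h₁ := deriv_sub_mul_nonpos_of_max (hdiff x₁ hx₁mem) hx₁mem hx₂mem hx₁max
    have h₂ := deriv_sub_mul_nonpos_of_max (hdiff x₂ hx₂mem) hx₂mem hx₁mem hx₂max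
    have h₃ := hsc x₁ hx₁mem x₂ hx₂mem
    have hpos : 0 < x₂ - x₁ := sub_pos.mpr h
    have key : (x₂ - x₁) * μ ≤ p₁ - p₂ := by
      refine le_of_mul_le_mul_right ?_ hpos
      linarith
    have : x₂ - x₁ ≤ max 0 (p₁ - p₂) / μ :=
      (le_div_iff₀ hμ).mpr (key.trans (le_max_right _ _))
    linarith
end

section
/- Under the NUM setup: let γ ≥ 0 and λ, λ' ∈ ℝ^m satisfy λ_k − λ'_k ≤ γ for every k ∈ {1,…,m}. Fix i ∈ {1,…,n}, let x_i be a maximizer of x ↦ f_i(x) − [Aᵀλ]_i·x over X_i, and x_i' a maximizer of x ↦ f_i(x) − [Aᵀλ']_i·x over X_i. Then x_i' ≤ x_i + γ·[Aᵀe_m]_i/μ. -/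
/-! First-order optimality on an interval turns the two maximality hypotheses into variational
inequalities (`deriv_sub_price_mul_nonpos`). If `xi < xi'`, testing each maximizer against the other
and adding gives `(f'(xi) - f'(xi')) * (xi' - xi) ≤ (p - p') * (xi' - xi)` for the path prices
`p = (Aᵀ λ)_i`, `p' = (Aᵀ λ')_i`. Strong concavity bounds the left side below by `μ (xi' - xi) ^ 2`,
while `p - p' ≤ γ (Aᵀ e)_i` because `A` is entrywise nonnegative; dividing by `xi' - xi > 0` and `μ`
gives the bound. -/

open Matrix Set

/-- Variational inequality for a maximizer `x` of `g` minus a linear cost at price `p`. -/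
lemma deriv_sub_price_mul_nonpos {a b p x y : ℝ} {g : ℝ → ℝ} (hx : x ∈ Icc a b) (hy : y ∈ Icc a b)
    (hg : DifferentiableAt ℝ g x)
    (hmax : ∀ z ∈ Icc a b, g z - p * z ≤ g x - p * x) :
    (deriv g x - p) * (y - x) ≤ 0 := by
  have hd : HasDerivAt (fun z => g z - p * z) (deriv g x - p) x := by
    have h := hg.hasDerivAt.sub ((hasDerivAt_id x).const_mul p)
    rw [mul_one] at h
    exact h
  have hloc : IsLocalMaxOn (fun z => g z - p * z) (Icc a b) x :=
    IsMaxOn.localize hmax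
  have h := hloc.hasFDerivWithinAt_nonpos hd.hasFDerivAt.hasFDerivWithinAt
    (sub_mem_posTangentConeAt_of_segment_subset ((convex_Icc a b).segment_subset hx hy))
  simpa [mul_comm] using h

/-- per-user demand increase bound when each dual (price) coordinate
decreases by at most γ. -/
theorem demand_increase_bound
    (n m : ℕ) (hn : 0 < n) (hm : 0 < m)
    (A : Matrix (Fin m) (Fin n) ℝ)
    (hA : ∀ j i, A j i = 0 ∨ A j i = 1)
    (xlo xhi : Fin n → ℝ) (hxlo : ∀ i, 0 ≤ xlo i) (hlohi : ∀ i, xlo i ≤ xhi i)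
    (μ : ℝ) (hμ : 0 < μ)
    (f : Fin n → ℝ → ℝ)
    (hdiff : ∀ i, ∀ z ∈ Icc (xlo i) (xhi i), DifferentiableAt ℝ (f i) z)
    (hsc : ∀ i, ∀ z ∈ Icc (xlo i) (xhi i), ∀ w ∈ Icc (xlo i) (xhi i),
      (deriv (f i) w - deriv (f i) z) * (z - w) ≥ μ * (z - w) ^ 2)
    (γ : ℝ) (hγ : 0 ≤ γ)
    (lam lam' : Fin m → ℝ) (hlam : ∀ k, lam k - lam' k ≤ γ)
    (i : Fin n)
    (xi xi' : ℝ)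
    (hximem : xi ∈ Icc (xlo i) (xhi i))
    (hximax : ∀ z ∈ Icc (xlo i) (xhi i),
      f i z - (Aᵀ *ᵥ lam) i * z ≤ f i xi - (Aᵀ *ᵥ lam) i * xi)
    (hxi'mem : xi' ∈ Icc (xlo i) (xhi i))
    (hxi'max : ∀ z ∈ Icc (xlo i) (xhi i),
      f i z - (Aᵀ *ᵥ lam') i * z ≤ f i xi' - (Aᵀ *ᵥ lam') i * xi') :
    xi' ≤ xi + γ * (Aᵀ *ᵥ (fun _ => (1 : ℝ))) i / μ := by
  have h1 := deriv_sub_price_mul_nonpos hximem hxi'mem (hdiff i xi hximem) hximax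
  have h2 := deriv_sub_price_mul_nonpos hxi'mem hximem (hdiff i xi' hxi'mem) hxi'max
  have h3 := hsc i xi' hxi'mem xi hximem
  have hA0 : ∀ k, 0 ≤ A k i := fun k => by rcases hA k i with h | h <;> simp [h]
  have hprice : (Aᵀ *ᵥ lam) i - (Aᵀ *ᵥ lam') i ≤ γ * (Aᵀ *ᵥ (fun _ => (1 : ℝ))) i := by
    simp only [mulVec, dotProduct, transpose_apply, Finset.mul_sum, ← Finset.sum_sub_distrib]
    refine Finset.sum_le_sum fun k _ => ?_
    nlinarith [mul_le_mul_of_nonneg_left (hlam k) (hA0 k)]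
  have hdeg : 0 ≤ (Aᵀ *ᵥ (fun _ => (1 : ℝ))) i := by
    simp only [mulVec, dotProduct, transpose_apply, mul_one]
    exact Finset.sum_nonneg fun k _ => hA0 k
  rcases le_or_gt xi' xi with hle | hlt
  · have : 0 ≤ γ * (Aᵀ *ᵥ (fun _ => (1 : ℝ))) i / μ := by positivity
    linarith
  · have hpos : 0 < xi' - xi := sub_pos.mpr hlt
    have key : μ * (xi' - xi) ≤ (Aᵀ *ᵥ lam) i - (Aᵀ *ᵥ lam') i :=
      le_of_mul_le_mul_right (by linarith) hpos
    have : xi' - xi ≤ γ * (Aᵀ *ᵥ (fun _ => (1 : ℝ))) i / μ := by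
      rw [le_div_iff₀ hμ]
      linarith
    linarith
end

section
/- Let m ≥ 1, λ̄ > 0, γ_- ≥ 0, γ_+ ≥ 0, and v, Δ, λ ∈ ℝ^m with v_j ≥ 0, Δ_j ≥ 0, and 0 ≤ λ_j ≤ λ̄ for all j. Define λ' ∈ ℝ^m by λ'_j = max{0, λ_j − γ_-} if v_j > Δ_j and λ'_j = min{λ̄, λ_j + γ_+} if v_j ≤ Δ_j, and let A₁ = {j : λ_j ≥ γ_- and v_j > Δ_j}. Then ⟨v, λ' − λ⟩ ≤ −γ_-·Σ_{j∈A₁} v_j + ‖Δ‖₁·γ_+, where ‖Δ‖₁ = Σ_j Δ_j. -/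
/-!
The bound holds coordinate by coordinate. If `v j > Δ j` and `lam j ≥ γm`, the step is exactly
`-γm`; if `v j > Δ j` and `lam j < γm`, the dual is clipped to `0`, so the step `-lam j` is
nonpositive; if `v j ≤ Δ j`, the step is at most `γp`, and `v j * γp ≤ Δ j * γp`.
-/

/-- inner-product bound on ⟨v, λ' − λ⟩ for the sign-based dual update
with safety margin Δ, downward step γ₋, upward step γ₊, and duals confined to [0, λ̄]. -/
theorem signed_update_inner_product_bound
    (m : ℕ) (hm : 1 ≤ m)
    (lamBar γm γp : ℝ) (hlamBar : 0 < lamBar) (hγm : 0 ≤ γm) (hγp : 0 ≤ γp)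
    (v Δ lam lam' : Fin m → ℝ)
    (hv : ∀ j, 0 ≤ v j) (hΔ : ∀ j, 0 ≤ Δ j)
    (hlam : ∀ j, 0 ≤ lam j ∧ lam j ≤ lamBar)
    (hupd : ∀ j,
      (Δ j < v j → lam' j = max 0 (lam j - γm)) ∧
      (v j ≤ Δ j → lam' j = min lamBar (lam j + γp))) :
    ∑ j, v j * (lam' j - lam j) ≤
      -γm * (∑ j ∈ Finset.univ.filter (fun j => γm ≤ lam j ∧ Δ j < v j), v j) +
        (∑ j, Δ j) * γp := by
  rw [Finset.sum_filter, Finset.mul_sum, Finset.sum_mul, ← Finset.sum_add_distrib]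
  refine Finset.sum_le_sum fun j _ => ?_
  have hΔγ : 0 ≤ Δ j * γp := mul_nonneg (hΔ j) hγp
  rcases lt_or_ge (Δ j) (v j) with h | h
  · rw [(hupd j).1 h]
    by_cases hg : γm ≤ lam j
    · rw [if_pos ⟨hg, h⟩, max_eq_right (sub_nonneg.2 hg)]
      linarith
    · rw [if_neg fun hc => hg hc.1, max_eq_left (by linarith)]
      linarith [mul_nonneg (hv j) (hlam j).1]
  · rw [(hupd j).2 h, if_neg fun hc => hc.2.not_ge h]
    have hstep : min lamBar (lam j + γp) - lam j ≤ γp := by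
      linarith [min_le_right lamBar (lam j + γp)]
    linarith [mul_le_mul_of_nonneg_left hstep (hv j), mul_le_mul_of_nonneg_right h hγp]
end

section
/- Under the NUM setup: suppose M ∈ ℝ satisfies f_i'(x) ≤ M for all x ∈ X_i and all i ∈ {1,…,n}, and that A x̲ ≤ c componentwise where x̲ = (x̲_1, …, x̲_n). Let λ ∈ ℝ^m have nonnegative entries with λ_j = M for some j ∈ {1,…,m}, and for each i let x_i be a maximizer of x ↦ f_i(x) − [Aᵀλ]_i·x over X_i. Then [Ax − c]_j ≤ 0. -/
open Matrix Set

/-!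
A user `i` on link `j` faces a total price of at least `lam j = M`, since all prices are nonnegative.
Strong concavity makes the marginal utility strictly smaller than its value at `xlo i`, hence
strictly below `M`, everywhere to the right of `xlo i`. By the mean value theorem, consuming more
than `xlo i` therefore gives a strictly smaller net utility, so every such user demands exactly
`xlo i`. The load on link `j` then equals that of the minimal allocation, which is feasible.
-/

/-- If the price `p` is at least a bound `M` on the marginal utility of the `μ`-strongly concave
function `g`, the only possible maximizer of the net
utility `g z - p * z` over `[a, b]` is the left endpoint. -/
lemma maximizer_eq_left {a b μ M p y : ℝ} {g : ℝ → ℝ} (hμ : 0 < μ)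
    (hdiff : ∀ z ∈ Icc a b, DifferentiableAt ℝ g z)
    (hsc : ∀ z ∈ Icc a b, ∀ w ∈ Icc a b,
      (deriv g w - deriv g z) * (z - w) ≥ μ * (z - w) ^ 2)
    (hM : ∀ z ∈ Icc a b, deriv g z ≤ M) (hp : M ≤ p) (hy : y ∈ Icc a b)
    (hmax : ∀ z ∈ Icc a b, g z - p * z ≤ g y - p * y) : y = a := by
  by_contra hne
  have hay : a < y := lt_of_le_of_ne hy.1 (Ne.symm hne)
  have ha : a ∈ Icc a b := ⟨le_rfl, hy.1.trans hy.2⟩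
  have hsub : ∀ z ∈ Icc a y, z ∈ Icc a b := fun z hz => ⟨hz.1, hz.2.trans hy.2⟩
  obtain ⟨ξ, hξ, hslope⟩ := exists_deriv_eq_slope g hay
    (fun z hz => (hdiff z (hsub z hz)).continuousAt.continuousWithinAt)
    (fun z hz => (hdiff z (hsub z (Ioo_subset_Icc_self hz))).differentiableWithinAt)
  have hstrong := hsc a ha ξ (hsub ξ (Ioo_subset_Icc_self hξ))
  have hpos : 0 < μ * (a - ξ) ^ 2 := mul_pos hμ (sq_pos_of_ne_zero (sub_ne_zero.2 hξ.1.ne))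
  have hlt : deriv g ξ < deriv g a := by
    by_contra! h
    nlinarith [mul_nonneg (sub_nonneg.2 h) (sub_nonneg.2 hξ.1.le)]
  have hltp : deriv g ξ < p := hlt.trans_le ((hM a ha).trans hp)
  rw [hslope, div_lt_iff₀ (sub_pos.2 hay)] at hltp
  linarith [hmax a ha]

/-- if marginal utilities are uniformly bounded by M and Ax̲ ≤ c, then any
price vector with λ_j = M yields demands satisfying constraint j (λ̄ = M is safe). -/
theorem marginal_utility_bound_safe
    (n m : ℕ) (hn : 0 < n) (hm : 0 < m)
    (A : Matrix (Fin m) (Fin n) ℝ)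
    (hA : ∀ j i, A j i = 0 ∨ A j i = 1)
    (c : Fin m → ℝ) (hc : ∀ j, 0 ≤ c j)
    (xlo xhi : Fin n → ℝ) (hxlo : ∀ i, 0 ≤ xlo i) (hlohi : ∀ i, xlo i ≤ xhi i)
    (μ : ℝ) (hμ : 0 < μ)
    (f : Fin n → ℝ → ℝ)
    (hdiff : ∀ i, ∀ z ∈ Icc (xlo i) (xhi i), DifferentiableAt ℝ (f i) z)
    (hsc : ∀ i, ∀ z ∈ Icc (xlo i) (xhi i), ∀ w ∈ Icc (xlo i) (xhi i),
      (deriv (f i) w - deriv (f i) z) * (z - w) ≥ μ * (z - w) ^ 2)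
    (M : ℝ)
    (hM : ∀ i, ∀ z ∈ Icc (xlo i) (xhi i), deriv (f i) z ≤ M)
    (hlofeas : ∀ j, (A *ᵥ xlo) j ≤ c j)
    (lam : Fin m → ℝ) (hlam : ∀ k, 0 ≤ lam k)
    (j : Fin m) (hlamj : lam j = M)
    (x : Fin n → ℝ)
    (hxmem : ∀ i, x i ∈ Icc (xlo i) (xhi i))
    (hxmax : ∀ i, ∀ z ∈ Icc (xlo i) (xhi i),
      f i z - (Aᵀ *ᵥ lam) i * z ≤ f i (x i) - (Aᵀ *ᵥ lam) i * (x i)) :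
    (A *ᵥ x) j - c j ≤ 0 := by
  have hterm : ∀ i, A j i * x i = A j i * xlo i := by
    intro i
    rcases hA j i with h | h
    · simp [h]
    · have hp : M ≤ (Aᵀ *ᵥ lam) i := by
        have hle := Finset.single_le_sum (f := fun k => A k i * lam k)
          (fun k _ => mul_nonneg (by rcases hA k i with h0 | h0 <;> simp [h0]) (hlam k))
          (Finset.mem_univ j)
        simpa [mulVec, dotProduct, h, hlamj] using hle
      rw [maximizer_eq_left hμ (hdiff i) (hsc i) (hM i) hp (hxmem i) (hxmax i)]
  have hload : (A *ᵥ x) j = (A *ᵥ xlo) j := by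
    simp only [mulVec, dotProduct, hterm]
  linarith [hlofeas j]
end
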